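/- arXiv:2601.04971 — 10 statements merged into one kernel-verified Lean document; each statement's English description precedes it below -/
import Mathlib

section
/- Let g be a 3×3 real symmetric matrix with det g ≠ 0, and suppose there exists a 3×3 rational matrix h with h ≠ I such that hᵀ g h = g (where h is regarded as a real matrix). Then there exists a 3×3 rational symmetric matrix g′ with det g′ ≠ 0 satisfying hᵀ g′ h = g′. -/
/-!
The conditions `Xᵀ = X` and `hᵀ X h = X` are linear in `X` with rational coefficients. Hence
applying any `ℚ`-linear map `F : ℝ → ℚ` to the entries of `g` gives a rational matrix that still
satisfies both (`map_transpose_mul_mul`). It remains to choose `F` so that the determinant stays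
nonzero: `F` can be taken arbitrarily close to the identity on the finitely many entries of `g`
(expand the entries in a `ℚ`-basis of `ℝ` and replace the finitely many basis vectors involved by
nearby rationals), and `det` is continuous (`exists_linearMap_det_ne_zero`).
-/

open Matrix

/-- Applying a `ℚ`-linear map entrywise commutes with `X ↦ hᵀ X h` for rational `h`. -/
lemma map_transpose_mul_mul (F : ℝ →ₗ[ℚ] ℚ) (g : Matrix (Fin 3) (Fin 3) ℝ)
    (h : Matrix (Fin 3) (Fin 3) ℚ) :
    hᵀ * g.map F * h = ((h.map ((↑) : ℚ → ℝ))ᵀ * g * h.map ((↑) : ℚ → ℝ)).map F := by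
  have key : ∀ (a c : ℚ) (x : ℝ), F ((a : ℝ) * x * (c : ℝ)) = a * F x * c := by
    intro a c x
    have : (a : ℝ) * x * (c : ℝ) = (a * c) • x := by
      rw [Rat.smul_def]; push_cast; ring
    rw [this, map_smul, smul_eq_mul]; ring
  ext i j
  simp only [Matrix.mul_apply, Matrix.map_apply, Matrix.transpose_apply, Finset.sum_mul,
    map_sum, key]

/-- A nonsingular real matrix stays nonsingular under some entrywise `ℚ`-linear map `ℝ → ℚ`. -/
lemma exists_linearMap_det_ne_zero (g : Matrix (Fin 3) (Fin 3) ℝ) (hdet : g.det ≠ 0) :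
    ∃ F : ℝ →ₗ[ℚ] ℚ, (g.map F).det ≠ 0 := by
  classical
  let b := Module.Basis.ofVectorSpace ℚ ℝ
  let T := Finset.univ.biUnion fun p : Fin 3 × Fin 3 => (b.repr (g p.1 p.2)).support
  -- `M x` is `g` with each basis vector `b k`, `k ∈ T`, replaced by the real number `x k`.
  let M : (T → ℝ) → Matrix (Fin 3) (Fin 3) ℝ := fun x =>
    Matrix.of fun i j => ∑ k : T, x k * (b.repr (g i j) k : ℝ)
  have hM : M (fun k => b k) = g := by
    ext i j
    have hsub : (b.repr (g i j)).support ⊆ T :=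
      Finset.subset_biUnion_of_mem (fun p : Fin 3 × Fin 3 => (b.repr (g p.1 p.2)).support)
        (Finset.mem_univ (i, j))
    have h1 := b.linearCombination_repr (g i j)
    rw [Finsupp.linearCombination_apply, Finsupp.sum_of_support_subset _ hsub _ (by simp),
      ← Finset.sum_coe_sort] at h1
    refine Eq.trans ?_ h1
    exact Finset.sum_congr rfl fun k _ => by rw [Rat.smul_def, mul_comm]
  have hcont : Continuous fun x => (M x).det := by
    refine Continuous.matrix_det (continuous_matrix fun i j => ?_)
    simp only [M, Matrix.of_apply]
    fun_prop
  have hdense : DenseRange (Pi.map fun (_ : T) (q : ℚ) => (q : ℝ)) :=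
    DenseRange.piMap fun _ => Rat.denseRange_cast
  obtain ⟨q, hq⟩ := hdense.exists_mem_open (isOpen_ne.preimage hcont)
    ⟨fun k => b k, by simpa [hM] using hdet⟩
  refine ⟨∑ k : T, q k • b.coord k, fun h0 => hq ?_⟩
  have hcast : M (Pi.map (fun _ (q : ℚ) => (q : ℝ)) q)
      = (g.map (∑ k : T, q k • b.coord k : ℝ →ₗ[ℚ] ℚ)).map (Rat.castHom ℝ) := by
    ext i j
    simp [M]
  change (M _).det = 0
  rw [hcast, ← RingHom.mapMatrix_apply, ← RingHom.map_det, h0, map_zero]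

theorem stmt_3 (g : Matrix (Fin 3) (Fin 3) ℝ) (hsym : gᵀ = g) (hdet : g.det ≠ 0)
    (h : Matrix (Fin 3) (Fin 3) ℚ) (hne : h ≠ 1)
    (hpres : (h.map ((↑) : ℚ → ℝ))ᵀ * g * h.map ((↑) : ℚ → ℝ) = g) :
    ∃ g' : Matrix (Fin 3) (Fin 3) ℚ, g'ᵀ = g' ∧ g'.det ≠ 0 ∧ hᵀ * g' * h = g' := by
  obtain ⟨F, hF⟩ := exists_linearMap_det_ne_zero g hdet
  refine ⟨g.map F, ?_, hF, ?_⟩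
  · rw [← Matrix.transpose_map, hsym]
  · rw [map_transpose_mul_mul, hpres]
end

section
/- Let h be a 3×3 real matrix whose characteristic polynomial equals (X − 1)(X² − 2cX + 1) for some real number c with −1 < c < 1. Let g be a 3×3 real symmetric invertible matrix with hᵀ g h = g, and let κ₀, κ₁, κ₂ be real numbers such that the matrix g(κ₀ I + κ₁ h + κ₂ h²) is symmetric. Then κ₁ = −2cκ₂. -/
open Matrix Polynomial

/-!
Put `k = g⁻¹ hᵀ g`. Invariance of `g` says that `k = h⁻¹`, so symmetry of
`g (κ₀ + κ₁ h + κ₂ h²)` becomes `κ₁ (k - h) + κ₂ (k² - h²) = 0`. By Cayley–Hamilton,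
`(h + k - 2c) (h - 1) = 0`, and since `h - k` is a multiple of `h - 1` this gives
`h² - k² = 2c (h - k)`. Hence `(κ₁ + 2c κ₂) (h - k) = 0`. If the scalar were nonzero, then
`h² = 1`, and Cayley–Hamilton with `c ≠ -1` would force `h = 1`, whose characteristic
polynomial `(X - 1)³` would require `c = 1`.
-/

theorem stmt_7 (h g : Matrix (Fin 3) (Fin 3) ℝ) (c : ℝ) (hc1 : -1 < c) (hc2 : c < 1)
    (hchar : h.charpoly = (X - 1) * (X ^ 2 - C (2 * c) * X + 1))
    (hsym : gᵀ = g) (hg : IsUnit g.det) (hpres : hᵀ * g * h = g)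
    (κ₀ κ₁ κ₂ : ℝ)
    (hsymm : (g * (κ₀ • (1 : Matrix (Fin 3) (Fin 3) ℝ) + κ₁ • h + κ₂ • (h * h)))ᵀ =
      g * (κ₀ • (1 : Matrix (Fin 3) (Fin 3) ℝ) + κ₁ • h + κ₂ • (h * h))) :
    κ₁ = -2 * c * κ₂ := by
  have hCH : (h - 1) * (h * h - (2 * c) • h + 1) = 0 := by
    have := Matrix.aeval_self_charpoly h
    rw [hchar] at this
    simpa [pow_two, Algebra.smul_def] using this
  obtain ⟨k, hk⟩ : ∃ k, k = g⁻¹ * hᵀ * g := ⟨_, rfl⟩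
  have hgk : hᵀ * g = g * k := by
    rw [hk, mul_assoc, Matrix.mul_nonsing_inv_cancel_left _ _ hg]
  have hkh : k * h = 1 := by
    rw [hk, mul_assoc, mul_assoc, ← mul_assoc hᵀ, hpres, Matrix.nonsing_inv_mul _ hg]
  have hhk : h * k = 1 := mul_eq_one_comm.mp hkh
  have hrel : κ₁ • (h - k) + κ₂ • (h * h - k * k) = 0 := by
    have h2 : hᵀ * (hᵀ * g) = g * (k * k) := by
      rw [hgk, ← mul_assoc, hgk, mul_assoc]
    have e : g * (κ₀ • (1 : Matrix (Fin 3) (Fin 3) ℝ) + κ₁ • k + κ₂ • (k * k)) =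
        g * (κ₀ • (1 : Matrix (Fin 3) (Fin 3) ℝ) + κ₁ • h + κ₂ • (h * h)) := by
      rw [← hsymm]
      simp only [transpose_mul, transpose_add, transpose_smul, hsym, mul_add,
        mul_smul_comm, mul_one, mul_assoc, hgk]
      rw [← mul_assoc hᵀ, hgk, mul_assoc]
    have e' := congrArg (g⁻¹ * ·) e
    simp only [Matrix.nonsing_inv_mul_cancel_left _ _ hg] at e'
    rw [← sub_eq_zero.mpr e'.symm]
    module
  have hsq : h * h - k * k = (2 * c) • (h - k) := by
    have hq : (h * h - (2 * c) • h + 1) * (h - 1) = 0 := by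
      rw [← hCH]
      simp only [mul_add, mul_sub, sub_mul, add_mul, smul_mul_assoc, mul_smul_comm, one_mul,
        mul_one, mul_assoc]
      module
    have hq1 : (h + k - (2 * c) • 1) * (h - 1) = 0 := by
      have : h + k - (2 * c) • 1 = k * (h * h - (2 * c) • h + 1) := by
        simp only [mul_add, mul_sub, mul_smul_comm, ← mul_assoc, hkh, one_mul, mul_one]
        abel
      rw [this, mul_assoc, hq, mul_zero]
    have hd : (h - 1) * (1 + k) = h - k := by
      simp only [mul_add, sub_mul, hhk, one_mul, mul_one]
      abel
    have : (h + k - (2 * c) • 1) * (h - k) = 0 := by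
      rw [← hd, ← mul_assoc, hq1, zero_mul]
    simp only [add_mul, sub_mul, mul_sub, smul_mul_assoc, one_mul, hhk, hkh] at this
    rw [smul_sub, ← sub_eq_zero, ← this]
    abel
  rw [hsq, smul_smul, ← add_smul] at hrel
  rcases smul_eq_zero.mp hrel with h0 | h0
  · linarith
  · exfalso
    have hh : h * h = 1 := by
      rw [← sub_eq_zero.mp h0] at hkh
      exact hkh
    have h1 : (2 + 2 * c) • (h - 1) = 0 := by
      have e : (h - 1) * (h * h - (2 * c) • h + 1) =
          h * h * h - (2 * c) • (h * h) + h - h * h + (2 * c) • h - 1 := by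
        simp only [mul_add, mul_sub, sub_mul, mul_smul_comm, one_mul, mul_one, mul_assoc]
        module
      rw [hCH, hh, one_mul] at e
      rw [e]
      module
    rcases smul_eq_zero.mp h1 with h2 | h2
    · linarith
    · rw [sub_eq_zero.mp h2, Matrix.charpoly_one] at hchar
      -- The difference of the two polynomials is `2 (1 - c) X (X - 1)`, which is visible at `-1`.
      have := congrArg (Polynomial.eval (-1)) hchar
      norm_num at this
      linarith
end

section
/- (Necessary condition for the existence of a 3D Moiré lattice.) Let g be a 3×3 real symmetric positive definite matrix, and suppose there exists a 3×3 rational matrix h (regarded as real) with det h = 1, hᵀ g h = g, and −1 < trace(h) < 3 (equivalently, h corresponds to a rotation by an angle θ ∉ {0, π}, so that h has three distinct eigenvalues). Then the ℚ-vector subspace of ℝ spanned by the nine entries of g has dimension at most 2; i.e., no more than two entries of the Gram matrix g are rationally independent. -/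
/-!
Let `B` be the real-valued `ℚ`-bilinear form on `ℚ³` with Gram matrix `g`, so that `h` is a
`B`-isometry. Since `det h = 1` and `h` preserves the nondegenerate `g`, `det (h - 1) = 0`, so `h`
fixes some rational `v ≠ 0`. Writing `c = tr h - 1`, Cayley–Hamilton then reads
`(h² - c h + 1) (h - 1) = 0`. As `tr h ≠ 3`, there is a nonzero `w` in the range of `h - 1`.
Invariance of `B` gives `B v w = B v (h w) = 0`, and `h² w = c h w - w` gives
`B w (h w) = (c / 2) B w w`. Because `-2 < c < 2` and `B` is positive definite, `v, w, h w` is a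
basis of `ℚ³`. In this basis all values of `B` are rational multiples of `B v v` and `B w w`;
hence so are all rational combinations of them, in particular the entries of `g`.
-/

open Matrix

/-- The real-valued `ℚ`-bilinear form `(x, y) ↦ xᵀ g y` on `ℚ³`. -/
noncomputable def gramForm (g : Matrix (Fin 3) (Fin 3) ℝ) :
    (Fin 3 → ℚ) →ₗ[ℚ] (Fin 3 → ℚ) →ₗ[ℚ] ℝ :=
  LinearMap.mk₂ ℚ (fun x y => (fun i => (x i : ℝ)) ⬝ᵥ g *ᵥ (fun i => (y i : ℝ)))
    (by intros; simp [dotProduct, mulVec, Fin.sum_univ_three]; ring)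
    (by intros; simp [dotProduct, mulVec, Fin.sum_univ_three, Rat.smul_def]; ring)
    (by intros; simp [dotProduct, mulVec, Fin.sum_univ_three]; ring)
    (by intros; simp [dotProduct, mulVec, Fin.sum_univ_three, Rat.smul_def]; ring)

lemma gramForm_apply (g : Matrix (Fin 3) (Fin 3) ℝ) (x y : Fin 3 → ℚ) :
    gramForm g x y = (fun i => (x i : ℝ)) ⬝ᵥ g *ᵥ (fun i => (y i : ℝ)) := rfl

lemma gramForm_single (g : Matrix (Fin 3) (Fin 3) ℝ) (i j : Fin 3) :
    gramForm g (Pi.single i 1) (Pi.single j 1) = g i j := by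
  rw [gramForm_apply]
  fin_cases i <;> fin_cases j <;>
    simp [dotProduct, mulVec, Fin.sum_univ_three, Pi.single_apply]

lemma gramForm_comm {g : Matrix (Fin 3) (Fin 3) ℝ} (hpd : g.PosDef) (x y : Fin 3 → ℚ) :
    gramForm g x y = gramForm g y x := by
  have hs : ∀ i j, g i j = g j i := fun i j => by simpa using (hpd.1.apply i j).symm
  simp only [gramForm_apply, dotProduct, mulVec, Fin.sum_univ_three]
  rw [hs 1 0, hs 2 0, hs 2 1]
  ring

lemma gramForm_pos {g : Matrix (Fin 3) (Fin 3) ℝ} (hpd : g.PosDef) {x : Fin 3 → ℚ}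
    (hx : x ≠ 0) : 0 < gramForm g x x := by
  have h0 : (fun i => (x i : ℝ)) ≠ 0 := fun h => hx (funext fun i => by
    have := congrFun h i
    simpa using this)
  simpa [gramForm_apply] using hpd.dotProduct_mulVec_pos h0

lemma gramForm_mulVec {g : Matrix (Fin 3) (Fin 3) ℝ} {h : Matrix (Fin 3) (Fin 3) ℚ}
    (hpres : (h.map ((↑) : ℚ → ℝ))ᵀ * g * h.map ((↑) : ℚ → ℝ) = g) (x y : Fin 3 → ℚ) :
    gramForm g (h *ᵥ x) (h *ᵥ y) = gramForm g x y := by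
  have hc : ∀ z : Fin 3 → ℚ, (fun i => ((h *ᵥ z) i : ℝ)) =
      h.map ((↑) : ℚ → ℝ) *ᵥ (fun i => (z i : ℝ)) := by
    intro z
    ext i
    simp [mulVec, dotProduct]
  rw [gramForm_apply, gramForm_apply, hc, hc]
  conv_rhs => rw [← hpres]
  simp only [← mulVec_mulVec, dotProduct_mulVec, vecMul_transpose, vecMul_vecMul]

/-- An isometry of determinant one of an odd-dimensional nondegenerate form has eigenvalue `1`:
`hᵀ g (h - 1) = -(h - 1)ᵀ g`, and taking determinants gives `det (h - 1) = -det (h - 1)`. -/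
lemma det_sub_one_eq_zero {g : Matrix (Fin 3) (Fin 3) ℝ} (hpd : g.PosDef)
    {h : Matrix (Fin 3) (Fin 3) ℚ} (hdet : h.det = 1)
    (hpres : (h.map ((↑) : ℚ → ℝ))ᵀ * g * h.map ((↑) : ℚ → ℝ) = g) :
    (h - 1).det = 0 := by
  set k := h.map ((↑) : ℚ → ℝ) with hk
  have hkdet : k.det = 1 := by
    have := (RingHom.map_det (Rat.castHom ℝ) h).symm
    simpa [hdet] using this
  have hk1 : (k - 1).det = ((h - 1).det : ℝ) := by
    have := RingHom.map_det (Rat.castHom ℝ) (h - 1)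
    rw [map_sub, map_one] at this
    exact this.symm
  have e : kᵀ * g * (k - 1) = -((k - 1)ᵀ * g) := by
    rw [mul_sub, hpres, transpose_sub, sub_mul]
    simp
  have e2 := congrArg det e
  rw [det_neg, det_mul, det_mul, det_mul, det_transpose, det_transpose, hkdet] at e2
  have hg := hpd.det_pos
  have : g.det * (k - 1).det = 0 := by
    simp at e2
    linarith
  have h0 : (k - 1).det = 0 := by
    rcases mul_eq_zero.1 this with h | h
    · exact absurd h hg.ne'
    · exact h
  rw [hk1] at h0
  exact_mod_cast h0

/-- Cayley–Hamilton for a `3 × 3` matrix of determinant `1` with eigenvalue `1`, whose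
characteristic polynomial is `(X - 1) (X² - (tr h - 1) X + 1)`. -/
lemma quadratic_mul_sub_one {h : Matrix (Fin 3) (Fin 3) ℚ} (hdet : h.det = 1)
    (h1 : (h - 1).det = 0) :
    h * (h * (h - 1)) = (h.trace - 1) • (h * (h - 1)) - (h - 1) := by
  rw [det_fin_three] at hdet h1
  simp [one_apply] at h1
  ext i j
  fin_cases i <;> fin_cases j <;>
    simp [mul_apply, Fin.sum_univ_three, trace, one_apply]
  · linear_combination (1 - h 0 0) * hdet + h 0 0 * h1
  · linear_combination (- h 0 1) * hdet + h 0 1 * h1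
  · linear_combination (- h 0 2) * hdet + h 0 2 * h1
  · linear_combination (- h 1 0) * hdet + h 1 0 * h1
  · linear_combination (1 - h 1 1) * hdet + h 1 1 * h1
  · linear_combination (- h 1 2) * hdet + h 1 2 * h1
  · linear_combination (- h 2 0) * hdet + h 2 0 * h1
  · linear_combination (- h 2 1) * hdet + h 2 1 * h1
  · linear_combination (1 - h 2 2) * hdet + h 2 2 * h1

theorem stmt_10 (g : Matrix (Fin 3) (Fin 3) ℝ) (hpd : g.PosDef)
    (h : Matrix (Fin 3) (Fin 3) ℚ) (hdet : h.det = 1)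
    (hpres : (h.map ((↑) : ℚ → ℝ))ᵀ * g * h.map ((↑) : ℚ → ℝ) = g)
    (htr1 : -1 < h.trace) (htr2 : h.trace < 3) :
    Module.finrank ℚ (Submodule.span ℚ {x : ℝ | ∃ i j, g i j = x}) ≤ 2 := by
  have hd1 := det_sub_one_eq_zero hpd hdet hpres
  have hCH := quadratic_mul_sub_one hdet hd1
  obtain ⟨v, hv0, hv⟩ := exists_mulVec_eq_zero_iff.2 hd1
  have hv : h *ᵥ v = v := by
    rw [sub_mulVec, one_mulVec] at hv
    exact sub_eq_zero.1 hv
  obtain ⟨u, hu⟩ : ∃ u, (h - 1) *ᵥ u ≠ 0 := by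
    by_contra! hcon
    have : h - 1 = 0 := by
      ext i j
      have := congrFun (hcon (Pi.single j 1)) i
      simpa using this
    rw [sub_eq_zero.1 this] at htr2
    simp at htr2
  set c := h.trace - 1 with hc
  obtain ⟨w, hw⟩ : ∃ w, w = (h - 1) *ᵥ u := ⟨_, rfl⟩
  rw [← hw] at hu
  have hq : h *ᵥ (h *ᵥ w) = c • (h *ᵥ w) - w := by
    have := congrArg (· *ᵥ u) hCH
    simpa only [sub_mulVec (c • _), smul_mulVec, ← mulVec_mulVec, ← hw] using this
  have hinv := gramForm_mulVec hpres
  have hsymm := gramForm_comm hpd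
  have hvpos := gramForm_pos hpd hv0
  have hwpos := gramForm_pos hpd hu
  set B := gramForm g with hB
  have hvw : B v w = 0 := by
    rw [hw, sub_mulVec, one_mulVec, map_sub]
    have := hinv v u
    rw [hv] at this
    rw [this, sub_self]
  have hvhw : B v (h *ᵥ w) = 0 := by
    have := hinv v w
    rwa [hv, hvw] at this
  have hhw : B (h *ᵥ w) (h *ᵥ w) = B w w := hinv w w
  have hwhw : B w (h *ᵥ w) = (c / 2 : ℚ) • B w w := by
    have := hinv w (h *ᵥ w)
    rw [hq, map_sub, map_smul, hhw] at this
    have hs := hsymm (h *ᵥ w) w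
    rw [Rat.smul_def] at this ⊢
    push_cast
    linarith
  have hli : LinearIndependent ℚ ![v, w, h *ᵥ w] := by
    rw [Fintype.linearIndependent_iff]
    intro a ha
    simp only [Fin.sum_univ_three, cons_val] at ha
    have e0 := congrArg (B v) ha
    have e1 := congrArg (B w) ha
    have e2 := congrArg (B (h *ᵥ w)) ha
    simp only [map_add, map_smul, map_zero, hvw, hvhw, hhw, hwhw, hsymm w v, hsymm (h *ᵥ w) v,
      hsymm (h *ᵥ w) w, smul_zero, add_zero, zero_add, Rat.smul_def] at e0 e1 e2
    have a0 : a 0 = 0 := by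
      rcases mul_eq_zero.1 e0 with h | h
      · exact_mod_cast h
      · exact absurd h hvpos.ne'
    have f1 : a 1 + a 2 * (c / 2) = 0 := by
      have : ((a 1 + a 2 * (c / 2) : ℚ) : ℝ) * B w w = 0 := by
        push_cast at e1 ⊢
        linarith
      rcases mul_eq_zero.1 this with h | h
      · exact_mod_cast h
      · exact absurd h hwpos.ne'
    have f2 : a 1 * (c / 2) + a 2 = 0 := by
      have : ((a 1 * (c / 2) + a 2 : ℚ) : ℝ) * B w w = 0 := by
        push_cast at e2 ⊢
        linarith
      rcases mul_eq_zero.1 this with h | h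
      · exact_mod_cast h
      · exact absurd h hwpos.ne'
    -- The Gram determinant of `w, h w` is `1 - c² / 4` up to a positive factor.
    have f3 : a 2 * ((2 - c) * (2 + c)) = 0 := by linear_combination 4 * f2 - 2 * c * f1
    have a2 : a 2 = 0 := by
      have : (2 - c) * (2 + c) > 0 := mul_pos (by linarith) (by linarith)
      exact (mul_eq_zero.1 f3).resolve_right this.ne'
    have a1 : a 1 = 0 := by simpa [a2] using f1
    intro i
    fin_cases i <;> assumption
  have htop := hli.span_eq_top_of_card_eq_finrank (by simp)
  set S : Submodule ℚ ℝ := Submodule.span ℚ {B v v, B w w} with hS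
  have hSv : B v v ∈ S := Submodule.subset_span (by simp)
  have hSw : B w w ∈ S := Submodule.subset_span (by simp)
  have hmem : ∀ x y, B x y ∈ S := by
    have hdec : ∀ x : Fin 3 → ℚ, ∃ a : Fin 3 → ℚ,
        x = a 0 • v + a 1 • w + a 2 • (h *ᵥ w) := by
      intro x
      have hx : x ∈ Submodule.span ℚ (Set.range ![v, w, h *ᵥ w]) := htop ▸ Submodule.mem_top
      obtain ⟨a, ha⟩ := (Submodule.mem_span_range_iff_exists_fun ℚ).1 hx
      exact ⟨a, by simpa [Fin.sum_univ_three] using ha.symm⟩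
    intro x y
    obtain ⟨a, rfl⟩ := hdec x
    obtain ⟨b, rfl⟩ := hdec y
    simp only [map_add, map_smul, LinearMap.add_apply, LinearMap.smul_apply, hvw, hvhw, hhw, hwhw,
      hsymm w v, hsymm (h *ᵥ w) v, hsymm (h *ᵥ w) w, smul_zero, add_zero, zero_add]
    repeat' first
      | exact hSv
      | exact hSw
      | apply S.add_mem
      | apply S.smul_mem
  have hle : Submodule.span ℚ {x : ℝ | ∃ i j, g i j = x} ≤ S := by
    rw [Submodule.span_le]
    rintro _ ⟨i, j, rfl⟩
    rw [← gramForm_single g i j]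
    exact hmem _ _
  have hfin : Module.Finite ℚ S := Module.Finite.span_of_finite ℚ (by simp)
  refine (Submodule.finrank_mono hle).trans ?_
  have := finrank_span_finset_le_card (R := ℚ) ({B v v, B w w} : Finset ℝ)
  simp only [Finset.coe_insert, Finset.coe_singleton] at this
  exact this.trans Finset.card_le_two
end

section
/- (One-axis property in the irrational case.) Let u be an invertible 3×3 real matrix and g = uᵀu. Assume g is not proportional to any rational matrix, i.e., there is no real number κ and 3×3 rational matrix g′ with g = κ·g′. Let r₁, r₂ ∈ M_g with −1 < trace(r₁) < 3 and −1 < trace(r₂) < 3 (so each rᵢ is a rotation by an angle θ ∉ {0, π}). Then r₁ and r₂ are rotations about the same axis: the fixed subspaces {v ∈ ℝ³ : r₁ v = v} and {v ∈ ℝ³ : r₂ v = v} coincide. -/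
/-!
Suppose the two axes differ. The rational matrices `Nᵢ = u⁻¹ rᵢ u` satisfy `Nᵢᵀ g Nᵢ = g` for
`g = uᵀ u`. A `ℚ`-linear functional `φ : ℝ → ℚ`, applied entrywise to this identity, yields a
rational matrix `g' = φ(g)` with `Nᵢᵀ g' Nᵢ = g'`, and `φ` can be chosen so that `g' ≠ 0`.
Transporting back by `u`, the matrix `H = u⁻ᵀ g' u⁻¹` commutes with both rotations.

A matrix commuting with two rotations about different axes, neither of angle `0` or `π`, is scalar
(`scalar_of_commute`): writing `wᵢ` for the axis vector of `rᵢ` read off from `rᵢ - rᵢᵀ`, `H`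
preserves the fixed line of `rᵢ`, so `H wᵢ = λᵢ wᵢ`; as `H` also commutes with
`rᵢ - rᵢᵀ = wᵢ × ·`, the vector `n = w₁ × w₂` satisfies `H n = λ₂ n = λ₁ n`; and `w₁, w₂, n` is a
basis. Hence `g' = λ g` with `λ ≠ 0`, so that `g` is proportional to a rational matrix.
-/

open Matrix

/-- For an invertible 3×3 real matrix `u`, the set of rotations `r ∈ SO(3,ℝ)` such that
all entries of `u⁻¹ * r * u` are rational. -/
def MoireGroup (u : Matrix (Fin 3) (Fin 3) ℝ) : Set (Matrix (Fin 3) (Fin 3) ℝ) :=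
  {r | rᵀ * r = 1 ∧ r.det = 1 ∧ ∀ i j, ∃ q : ℚ, (u⁻¹ * r * u) i j = (q : ℝ)}

/-- The axial vector of `r - rᵀ`: it satisfies `(r - rᵀ) v = axisVec r × v`. For a rotation by `θ`
about the unit vector `a` it equals `2 sin θ • a`. -/
def axisVec (r : Matrix (Fin 3) (Fin 3) ℝ) : Fin 3 → ℝ :=
  ![r 2 1 - r 1 2, r 0 2 - r 2 0, r 1 0 - r 0 1]

lemma sub_transpose_mulVec (r : Matrix (Fin 3) (Fin 3) ℝ) (v : Fin 3 → ℝ) :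
    (r - rᵀ) *ᵥ v = crossProduct (axisVec r) v := by
  ext i
  fin_cases i <;>
    simp [axisVec, cross_apply, mulVec, dotProduct, Fin.sum_univ_three] <;> ring

/-- A rotation equals its own cofactor matrix. -/
lemma adjugate_eq_transpose {r : Matrix (Fin 3) (Fin 3) ℝ} (ho : rᵀ * r = 1) (hd : r.det = 1) :
    r.adjugate = rᵀ := by
  calc r.adjugate = (rᵀ * r) * r.adjugate := by rw [ho, one_mul]
    _ = rᵀ := by rw [mul_assoc, mul_adjugate, hd, one_smul, mul_one]

lemma mulVec_axisVec {r : Matrix (Fin 3) (Fin 3) ℝ} (ho : rᵀ * r = 1) (hd : r.det = 1) :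
    r *ᵥ axisVec r = axisVec r := by
  have h := adjugate_eq_transpose ho hd
  have e : ∀ i j, r.adjugate i j = r j i := fun i j => by rw [h, transpose_apply]
  have e01 := e 0 1
  have e10 := e 1 0
  have e02 := e 0 2
  have e20 := e 2 0
  have e12 := e 1 2
  have e21 := e 2 1
  simp [adjugate_fin_three] at e01 e10 e02 e20 e12 e21
  ext i
  fin_cases i <;>
    simp [axisVec, mulVec, dotProduct, Fin.sum_univ_three] <;> linarith

/-- The axial vector vanishes only for symmetric rotations, which have trace `3` or `-1`. -/
lemma axisVec_ne_zero {r : Matrix (Fin 3) (Fin 3) ℝ} (ho : rᵀ * r = 1) (hd : r.det = 1)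
    (h1 : -1 < r.trace) (h3 : r.trace < 3) : axisVec r ≠ 0 := by
  intro hw
  have w0 := congrFun hw 0
  have w1 := congrFun hw 1
  have w2 := congrFun hw 2
  simp [axisVec] at w0 w1 w2
  have h := adjugate_eq_transpose ho hd
  have e : ∀ i, r.adjugate i i = r i i := fun i => by rw [h, transpose_apply]
  have e0 := e 0
  have e1 := e 1
  have e2 := e 2
  have o : ∀ i, (rᵀ * r) i i = 1 := fun i => by rw [ho, one_apply_eq]
  have o0 := o 0
  have o1 := o 1
  have o2 := o 2
  simp [adjugate_fin_three] at e0 e1 e2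
  simp [mul_apply, Fin.sum_univ_three] at o0 o1 o2
  rw [trace_fin_three] at h1 h3
  rw [sub_eq_zero] at w0 w1 w2
  rw [w0, w1, w2] at *
  -- The principal minors sum to the trace `t`, and `tr (r²) = 3`, so `(t + 1) (t - 3) = 0`.
  have key : (r 0 0 + r 1 1 + r 2 2 + 1) * (3 - (r 0 0 + r 1 1 + r 2 2)) = 0 := by
    linear_combination -2 * e0 - 2 * e1 - 2 * e2 - o0 - o1 - o2
  have : 0 < (r 0 0 + r 1 1 + r 2 2 + 1) * (3 - (r 0 0 + r 1 1 + r 2 2)) :=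
    mul_pos (by linarith) (by linarith)
  linarith

/-- The fixed subspace of `r` is the line spanned by its axial vector. -/
lemma fixed_iff {r : Matrix (Fin 3) (Fin 3) ℝ} (ho : rᵀ * r = 1) (hd : r.det = 1)
    (hw : axisVec r ≠ 0) (v : Fin 3 → ℝ) : r *ᵥ v = v ↔ ∃ c : ℝ, c • axisVec r = v := by
  constructor
  · intro hv
    have ht : rᵀ *ᵥ v = v := by
      conv_lhs => rw [← hv]
      rw [mulVec_mulVec, ho, one_mulVec]
    have hc : crossProduct (axisVec r) v = 0 := by
      rw [← sub_transpose_mulVec, sub_mulVec, hv, ht, sub_self]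
    by_contra hne
    push Not at hne
    exact crossProduct_ne_zero_iff_linearIndependent.2
      ((LinearIndependent.pair_iff' hw).2 hne) hc
  · rintro ⟨c, rfl⟩
    rw [mulVec_smul, mulVec_axisVec ho hd]

/-- A matrix commuting with two rotations about different axes is scalar. -/
lemma scalar_of_commute {r₁ r₂ H : Matrix (Fin 3) (Fin 3) ℝ}
    (ho₁ : r₁ᵀ * r₁ = 1) (hd₁ : r₁.det = 1) (hw₁ : axisVec r₁ ≠ 0)
    (ho₂ : r₂ᵀ * r₂ = 1) (hd₂ : r₂.det = 1) (hw₂ : axisVec r₂ ≠ 0)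
    (hn : crossProduct (axisVec r₁) (axisVec r₂) ≠ 0)
    (hH₁ : r₁ᵀ * H * r₁ = H) (hH₂ : r₂ᵀ * H * r₂ = H) : ∃ l : ℝ, H = l • 1 := by
  have comm : ∀ r : Matrix (Fin 3) (Fin 3) ℝ, rᵀ * r = 1 → rᵀ * H * r = H →
      H * r = r * H ∧ H * (r - rᵀ) = (r - rᵀ) * H := by
    intro r ho hH
    have ho' : r * rᵀ = 1 := mul_eq_one_comm.1 ho
    have a : H * r = r * H := by
      calc H * r = (r * rᵀ) * (H * r) := by rw [ho', one_mul]
        _ = r * (rᵀ * H * r) := by simp only [mul_assoc]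
        _ = r * H := by rw [hH]
    have b : H * rᵀ = rᵀ * H := by
      calc H * rᵀ = (rᵀ * H * r) * rᵀ := by rw [hH]
        _ = rᵀ * H * (r * rᵀ) := by simp only [mul_assoc]
        _ = rᵀ * H := by rw [ho', mul_one]
    exact ⟨a, by rw [mul_sub, sub_mul, a, b]⟩
  have eig : ∀ r : Matrix (Fin 3) (Fin 3) ℝ, rᵀ * r = 1 → r.det = 1 → axisVec r ≠ 0 →
      H * r = r * H → ∃ c : ℝ, c • axisVec r = H *ᵥ axisVec r := by
    intro r ho hd hw hc
    rw [← fixed_iff ho hd hw, mulVec_mulVec, ← hc, ← mulVec_mulVec, mulVec_axisVec ho hd]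
  obtain ⟨c₁, s₁⟩ := comm r₁ ho₁ hH₁
  obtain ⟨c₂, s₂⟩ := comm r₂ ho₂ hH₂
  obtain ⟨l₁, e₁⟩ := eig r₁ ho₁ hd₁ hw₁ c₁
  obtain ⟨l₂, e₂⟩ := eig r₂ ho₂ hd₂ hw₂ c₂
  have n₁ : H *ᵥ crossProduct (axisVec r₁) (axisVec r₂) =
      l₂ • crossProduct (axisVec r₁) (axisVec r₂) := by
    rw [← sub_transpose_mulVec, mulVec_mulVec, s₁, ← mulVec_mulVec, ← e₂, mulVec_smul]
  have n₂ : H *ᵥ crossProduct (axisVec r₁) (axisVec r₂) =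
      l₁ • crossProduct (axisVec r₁) (axisVec r₂) := by
    rw [← cross_anticomm, ← sub_transpose_mulVec, mulVec_neg, mulVec_mulVec, s₂,
      ← mulVec_mulVec, ← e₁, mulVec_smul, smul_neg]
  have hl : l₁ = l₂ := smul_left_injective ℝ hn (n₂.symm.trans n₁)
  subst hl
  generalize axisVec r₁ = a at *
  generalize axisVec r₂ = b at *
  set n := crossProduct a b with hndef
  refine ⟨l₁, ?_⟩
  have hnn : n ⬝ᵥ n ≠ 0 := fun h => hn (dotProduct_self_eq_zero.1 h)
  -- Expansion of `v` in the basis `a, b, n`; the determinant of this basis is `n ⬝ᵥ n`.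
  have expand : ∀ v : Fin 3 → ℝ, (n ⬝ᵥ n) • v = (v ⬝ᵥ crossProduct b n) • a +
      (v ⬝ᵥ crossProduct n a) • b + (v ⬝ᵥ n) • n := by
    intro v
    rw [hndef]
    ext i
    fin_cases i <;>
      simp [cross_apply, dotProduct, Fin.sum_univ_three] <;> ring
  apply ext_of_mulVec_single
  intro i
  generalize (Pi.single i 1 : Fin 3 → ℝ) = v
  apply smul_right_injective _ hnn
  change (n ⬝ᵥ n) • (H *ᵥ v) = (n ⬝ᵥ n) • ((l₁ • (1 : Matrix (Fin 3) (Fin 3) ℝ)) *ᵥ v)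
  rw [← mulVec_smul, ← mulVec_smul, expand, smul_mulVec, one_mulVec, mulVec_add, mulVec_add,
    mulVec_smul, mulVec_smul, mulVec_smul, n₁, ← e₁, ← e₂]
  simp only [smul_add, smul_comm l₁]

/-- A `ℚ`-linear functional applied entrywise commutes with multiplication by rational matrices. -/
lemma map_functional (φ : ℝ →ₗ[ℚ] ℚ) (Q : Matrix (Fin 3) (Fin 3) ℚ)
    (g : Matrix (Fin 3) (Fin 3) ℝ) :
    ((Q.map ((↑) : ℚ → ℝ))ᵀ * g * Q.map ((↑) : ℚ → ℝ)).map φ = Qᵀ * g.map φ * Q := by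
  have hφ : ∀ (q : ℚ) (x : ℝ), φ ((q : ℝ) * x) = q * φ x := fun q x => by
    rw [← Rat.smul_def, map_smul, smul_eq_mul]
  have hφ' : ∀ (q : ℚ) (x : ℝ), φ (x * (q : ℝ)) = φ x * q := fun q x => by
    rw [mul_comm, hφ, mul_comm]
  ext i j
  simp [mul_apply, hφ, hφ']

theorem stmt_11 (u : Matrix (Fin 3) (Fin 3) ℝ) (hu : IsUnit u.det)
    (hirr : ¬ ∃ (κ : ℝ) (g' : Matrix (Fin 3) (Fin 3) ℚ),
      uᵀ * u = κ • g'.map ((↑) : ℚ → ℝ))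
    (r₁ r₂ : Matrix (Fin 3) (Fin 3) ℝ)
    (h₁ : r₁ ∈ MoireGroup u) (h₂ : r₂ ∈ MoireGroup u)
    (ht₁ : -1 < r₁.trace) (ht₁' : r₁.trace < 3)
    (ht₂ : -1 < r₂.trace) (ht₂' : r₂.trace < 3) :
    {v : Fin 3 → ℝ | r₁.mulVec v = v} = {v : Fin 3 → ℝ | r₂.mulVec v = v} := by
  obtain ⟨ho₁, hd₁, hq₁⟩ := h₁
  obtain ⟨ho₂, hd₂, hq₂⟩ := h₂
  have hw₁ := axisVec_ne_zero ho₁ hd₁ ht₁ ht₁'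
  have hw₂ := axisVec_ne_zero ho₂ hd₂ ht₂ ht₂'
  by_cases hn : crossProduct (axisVec r₁) (axisVec r₂) = 0
  · -- Parallel axial vectors span the same line.
    have hpar : ∃ c : ℝ, c • axisVec r₁ = axisVec r₂ := by
      by_contra hne
      push Not at hne
      exact crossProduct_ne_zero_iff_linearIndependent.2
        ((LinearIndependent.pair_iff' hw₁).2 hne) hn
    obtain ⟨c, hc⟩ := hpar
    have hc0 : c ≠ 0 := by
      rintro rfl
      exact hw₂ (by rw [← hc, zero_smul])
    ext v
    simp only [Set.mem_ofPred_eq]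
    rw [fixed_iff ho₁ hd₁ hw₁, fixed_iff ho₂ hd₂ hw₂, ← hc]
    constructor
    · rintro ⟨d, rfl⟩
      exact ⟨d / c, by rw [smul_smul, div_mul_cancel₀ _ hc0]⟩
    · rintro ⟨d, rfl⟩
      exact ⟨d * c, by rw [smul_smul]⟩
  · exfalso
    apply hirr
    have hui : u * u⁻¹ = 1 := mul_nonsing_inv u hu
    have hiu : u⁻¹ * u = 1 := nonsing_inv_mul u hu
    have huiT : (u⁻¹)ᵀ * uᵀ = 1 := by rw [← transpose_mul, hui, transpose_one]
    have hiuT : uᵀ * (u⁻¹)ᵀ = 1 := by rw [← transpose_mul, hiu, transpose_one]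
    obtain ⟨i, j, hij⟩ : ∃ i j, (uᵀ * u) i j ≠ 0 := by
      by_contra! h
      have h0 : uᵀ * u = 0 := by
        ext i j
        exact h i j
      have hdet := congrArg det h0
      rw [det_mul, det_transpose, det_zero] at hdet
      exact hu.ne_zero (mul_self_eq_zero.1 hdet)
    obtain ⟨φ, hφ⟩ : ∃ φ : ℝ →ₗ[ℚ] ℚ, φ ((uᵀ * u) i j) ≠ 0 := by
      by_contra! h
      exact hij ((Module.forall_dual_apply_eq_zero_iff ℚ _).1 h)
    set g' : Matrix (Fin 3) (Fin 3) ℚ := (uᵀ * u).map φ with hg'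
    set G : Matrix (Fin 3) (Fin 3) ℝ := g'.map ((↑) : ℚ → ℝ) with hG
    have inv : ∀ r : Matrix (Fin 3) (Fin 3) ℝ, rᵀ * r = 1 →
        (∀ i j, ∃ q : ℚ, (u⁻¹ * r * u) i j = (q : ℝ)) →
        rᵀ * ((u⁻¹)ᵀ * G * u⁻¹) * r = (u⁻¹)ᵀ * G * u⁻¹ := by
      intro r ho hq
      choose Q hQ using hq
      have hN : u⁻¹ * r * u = (of Q).map ((↑) : ℚ → ℝ) := by
        ext i j
        exact hQ i j
      have hg : (u⁻¹ * r * u)ᵀ * (uᵀ * u) * (u⁻¹ * r * u) = uᵀ * u := by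
        calc (u⁻¹ * r * u)ᵀ * (uᵀ * u) * (u⁻¹ * r * u)
            = uᵀ * rᵀ * ((u⁻¹)ᵀ * uᵀ) * (u * u⁻¹) * r * u := by
              simp only [transpose_mul, mul_assoc]
          _ = uᵀ * (rᵀ * r) * u := by rw [huiT, hui]; simp only [mul_one, mul_assoc]
          _ = uᵀ * u := by rw [ho, mul_one]
      have hrat : (of Q)ᵀ * g' * of Q = g' := by
        rw [hg', ← map_functional, ← hN, hg]
      have hreal : (u⁻¹ * r * u)ᵀ * G * (u⁻¹ * r * u) = G := by
        have := congrArg (fun M : Matrix (Fin 3) (Fin 3) ℚ => M.map (Rat.castHom ℝ)) hrat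
        simp only [Matrix.map_mul] at this
        rw [hN]
        exact this
      calc rᵀ * ((u⁻¹)ᵀ * G * u⁻¹) * r
          = ((u⁻¹)ᵀ * uᵀ) * rᵀ * ((u⁻¹)ᵀ * G * u⁻¹) * r * (u * u⁻¹) := by
            rw [huiT, hui, one_mul, mul_one]
        _ = (u⁻¹)ᵀ * ((u⁻¹ * r * u)ᵀ * G * (u⁻¹ * r * u)) * u⁻¹ := by
            simp only [transpose_mul, mul_assoc]
        _ = (u⁻¹)ᵀ * G * u⁻¹ := by rw [hreal]
    obtain ⟨l, hl⟩ := scalar_of_commute ho₁ hd₁ hw₁ ho₂ hd₂ hw₂ hn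
      (inv r₁ ho₁ hq₁) (inv r₂ ho₂ hq₂)
    have hGl : G = l • (uᵀ * u) := by
      calc G = (uᵀ * (u⁻¹)ᵀ) * G * (u⁻¹ * u) := by rw [hiuT, hiu, one_mul, mul_one]
        _ = uᵀ * ((u⁻¹)ᵀ * G * u⁻¹) * u := by simp only [mul_assoc]
        _ = l • (uᵀ * u) := by rw [hl, Matrix.mul_smul, mul_one, Matrix.smul_mul]
    have hl0 : l ≠ 0 := by
      rintro rfl
      rw [zero_smul] at hGl
      have := congrFun (congrFun hGl i) j
      simp only [hG, hg', map_apply, Matrix.zero_apply, Rat.cast_eq_zero] at this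
      exact hφ this
    exact ⟨l⁻¹, g', by rw [← hG, hGl, smul_smul, inv_mul_cancel₀ hl0, one_smul]⟩
end

section
/- Let g be a 3×3 real symmetric positive definite matrix that is not proportional to any rational matrix (there is no real κ and rational matrix g′ with g = κ·g′). Let g₁ and g₂ be 3×3 rational symmetric matrices with nonzero determinant. Suppose there exist 3×3 rational matrices h₁, h₂, each with determinant 1 and trace strictly between −1 and 3, such that h₁ᵀ g h₁ = g, h₁ᵀ g₁ h₁ = g₁, h₂ᵀ g h₂ = g, and h₂ᵀ g₂ h₂ = g₂. Then h₁ also satisfies h₁ᵀ g₂ h₁ = g₂; consequently H_g ∩ H_{g₁} = H_g ∩ H_{g₂}. -/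
/-!
Let `h` be a matrix of determinant `1` preserving the positive definite form `g`, with trace
strictly between `-1` and `3`. The real symmetric forms invariant under `h` make up a space of
dimension at most two, spanned by `g` and a form `P` of rank one (`exists_invariant_span`). Indeed,
with `J = h - h⁻¹`, a symmetric form `k` is invariant under `h` only if `k * J` is antisymmetric, so
that `k * J` is the matrix of the cross product with some vector. Since `g * J = [u]ₓ` with `u ≠ 0`,
`u` spans the kernel of `J`, hence `k * J = c • (g * J)` for some `c`; then `k - c • g` is symmetric
and kills the plane `range J`, so it is a multiple of the square of the linear form `g u`.

A `ℚ`-linear functional `φ : ℝ → ℚ` that does not vanish at the entry `g 0 0`, applied entrywise to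
`g`, gives a nonzero rational form `A` which is invariant under every rational matrix preserving `g`.
As `g` is not proportional to a rational matrix, `A` and `g` are linearly independent, so they span
all symmetric forms invariant under `h`. Therefore every rational symmetric form invariant under `h`
is invariant under all of `H_g` (`invariant_of_invariant`). In particular `g₁` and `g₂` are, and both
intersections in the theorem are equal to `H_g`.
-/


open Matrix

/-- For a 3×3 real symmetric matrix `g`, the set of rational matrices `h` with `det h = 1`
preserving the quadratic form given by `g` (rational matrices regarded as real). -/
def Hgroup (g : Matrix (Fin 3) (Fin 3) ℝ) : Set (Matrix (Fin 3) (Fin 3) ℚ) :=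
  {h | h.det = 1 ∧ (h.map ((↑) : ℚ → ℝ))ᵀ * g * h.map ((↑) : ℚ → ℝ) = g}

/-- For a 3×3 rational symmetric matrix `g`, the corresponding group of rational matrices. -/
def HgroupQ (g : Matrix (Fin 3) (Fin 3) ℚ) : Set (Matrix (Fin 3) (Fin 3) ℚ) :=
  {h | h.det = 1 ∧ hᵀ * g * h = g}

/-- The matrix of the cross product `w ↦ u × w`. -/
def crossMat (u : Fin 3 → ℝ) : Matrix (Fin 3) (Fin 3) ℝ :=
  !![0, -u 2, u 1; u 2, 0, -u 0; -u 1, u 0, 0]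

theorem exists_eq_crossMat (X : Matrix (Fin 3) (Fin 3) ℝ) (hX : Xᵀ = -X) :
    ∃ u, X = crossMat u := by
  refine ⟨![X 2 1, X 0 2, X 1 0], ?_⟩
  have e : ∀ i j, X j i = -X i j := fun i j => congrFun (congrFun hX i) j
  ext i j
  fin_cases i <;> fin_cases j <;> simp [crossMat] <;>
    first | linarith [e 0 0, e 1 1, e 2 2] | exact e _ _

theorem crossMat_mulVec_self (u : Fin 3 → ℝ) : crossMat u *ᵥ u = 0 := by
  ext i
  fin_cases i <;> simp [crossMat, mulVec, dotProduct, Fin.sum_univ_three] <;> ring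

theorem crossMat_ne_zero {u : Fin 3 → ℝ} (hu : crossMat u ≠ 0) : u ≠ 0 := by
  rintro rfl
  apply hu
  ext i j
  fin_cases i <;> fin_cases j <;> simp [crossMat]

theorem crossMat_smul (c : ℝ) (u : Fin 3 → ℝ) : crossMat (c • u) = c • crossMat u := by
  ext i j
  fin_cases i <;> fin_cases j <;> simp [crossMat]

theorem exists_smul_of_cross {u w : Fin 3 → ℝ} (hu : u ≠ 0)
    (hp : ∀ i j, w i * u j = w j * u i) : ∃ c : ℝ, w = c • u := by
  obtain ⟨i, hi⟩ := Function.ne_iff.1 hu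
  refine ⟨w i / u i, ?_⟩
  ext j
  have hi' : u i ≠ 0 := hi
  simp only [Pi.smul_apply, smul_eq_mul]
  field_simp
  linarith [hp i j]

theorem exists_smul_of_crossMat_mulVec {u w : Fin 3 → ℝ} (hu : u ≠ 0)
    (h : crossMat w *ᵥ u = 0) : ∃ c : ℝ, w = c • u := by
  apply exists_smul_of_cross hu
  have h0 := congrFun h 0
  have h1 := congrFun h 1
  have h2 := congrFun h 2
  simp [crossMat, mulVec, dotProduct, Fin.sum_univ_three] at h0 h1 h2
  intro i j
  fin_cases i <;> fin_cases j <;> simp <;> linarith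

theorem exists_smul_of_vecMul_crossMat {u w : Fin 3 → ℝ} (hu : u ≠ 0)
    (h : w ᵥ* crossMat u = 0) : ∃ c : ℝ, w = c • u := by
  apply exists_smul_of_cross hu
  have h0 := congrFun h 0
  have h1 := congrFun h 1
  have h2 := congrFun h 2
  simp [crossMat, vecMul, dotProduct, Fin.sum_univ_three] at h0 h1 h2
  intro i j
  fin_cases i <;> fin_cases j <;> simp <;> linarith

/-- The Cayley–Hamilton relation in dimension three, solved for the adjugate. -/
theorem adjugate_fin_three_eq (h : Matrix (Fin 3) (Fin 3) ℝ) :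
    h.adjugate = h * h - h.trace • h + h.adjugate.trace • 1 := by
  rw [adjugate_fin_three]
  ext i j
  fin_cases i <;> fin_cases j <;>
    simp [Matrix.mul_apply, Matrix.trace, Fin.sum_univ_three] <;> ring

/-- A matrix of determinant `1` and order at most two has trace `3` or `-1`. -/
theorem adjugate_ne_self (h : Matrix (Fin 3) (Fin 3) ℝ) (hdet : h.det = 1)
    (ht : -1 < h.trace) (ht' : h.trace < 3) : h - h.adjugate ≠ 0 := by
  intro h0
  have ha : h.adjugate = h := (sub_eq_zero.1 h0).symm
  have hch := adjugate_fin_three_eq h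
  have hsq : h * h = 1 := by
    have := Matrix.mul_adjugate h
    rwa [ha, hdet, one_smul] at this
  rw [ha, hsq] at hch
  have htr := congrArg Matrix.trace hch
  simp [Matrix.trace_add, Matrix.trace_sub, Matrix.trace_smul] at htr
  nlinarith

/-- The symmetric forms invariant under `h` are combinations of `g` and one further form. -/
theorem exists_invariant_span (g h : Matrix (Fin 3) (Fin 3) ℝ) (hpd : g.PosDef)
    (hdet : h.det = 1) (ht : -1 < h.trace) (ht' : h.trace < 3) (hg : hᵀ * g * h = g) :
    ∃ P : Matrix (Fin 3) (Fin 3) ℝ, ∀ k : Matrix (Fin 3) (Fin 3) ℝ, kᵀ = k → hᵀ * k * h = k →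
      ∃ a b : ℝ, k = a • g + b • P := by
  have hgs : gᵀ = g := by simpa using hpd.isHermitian.eq
  have hgd : IsUnit g.det := hpd.det_pos.ne'.isUnit
  have hha : h * h.adjugate = 1 := by rw [Matrix.mul_adjugate, hdet, one_smul]
  set J := h - h.adjugate with hJ
  have anti : ∀ k : Matrix (Fin 3) (Fin 3) ℝ, kᵀ = k → hᵀ * k * h = k →
      (k * J)ᵀ = -(k * J) := by
    intro k hk hk'
    have e1 : k * h.adjugate = hᵀ * k := by
      conv_lhs => rw [← hk']
      rw [Matrix.mul_assoc, hha, Matrix.mul_one]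
    have e2 : h.adjugateᵀ * k = k * h := by
      have := congrArg Matrix.transpose e1
      simpa [Matrix.transpose_mul, hk] using this
    rw [hJ, Matrix.transpose_mul, hk, Matrix.transpose_sub, Matrix.sub_mul, Matrix.mul_sub,
      e1, e2, neg_sub]
  obtain ⟨u, hu⟩ := exists_eq_crossMat _ (anti g hgs hg)
  have hJu : J = g⁻¹ * crossMat u := by
    rw [← hu, ← Matrix.mul_assoc, Matrix.nonsing_inv_mul _ hgd, Matrix.one_mul]
  have hu0 : u ≠ 0 := by
    apply crossMat_ne_zero
    intro h0
    exact adjugate_ne_self h hdet ht ht' (by rw [← hJ, hJu, h0, Matrix.mul_zero])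
  have hker : J *ᵥ u = 0 := by
    rw [hJu, ← Matrix.mulVec_mulVec, crossMat_mulVec_self, Matrix.mulVec_zero]
  have hp0 : u ᵥ* g ≠ 0 := by
    intro h0
    apply hu0
    have := congrArg (fun x => x ᵥ* g⁻¹) h0
    simpa [Matrix.vecMul_vecMul, Matrix.mul_nonsing_inv _ hgd] using this
  refine ⟨vecMulVec (u ᵥ* g) (u ᵥ* g), fun k hk hk' => ?_⟩
  obtain ⟨w, hw⟩ := exists_eq_crossMat _ (anti k hk hk')
  obtain ⟨c, rfl⟩ := exists_smul_of_crossMat_mulVec hu0 (w := w) (by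
    rw [← hw, ← Matrix.mulVec_mulVec, hker, Matrix.mulVec_zero])
  set m := k - c • g with hm
  have hmJ : m * g⁻¹ * crossMat u = 0 := by
    rw [Matrix.mul_assoc, ← hJu, hm, Matrix.sub_mul, hw, Matrix.smul_mul, hu, crossMat_smul,
      sub_self]
  have hrow : ∀ i, ∃ d : ℝ, (m * g⁻¹) i = d • u := fun i =>
    exists_smul_of_vecMul_crossMat hu0 (by
      have := congrFun hmJ i
      rwa [Matrix.mul_apply_eq_vecMul] at this)
  choose d hd using hrow
  have hmd : m = vecMulVec d (u ᵥ* g) := by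
    have e : m * g⁻¹ = vecMulVec d u := by
      ext i j
      rw [hd i]
      simp [vecMulVec]
    have e' := congrArg (· * g) e
    simpa [Matrix.mul_assoc, Matrix.nonsing_inv_mul _ hgd, Matrix.vecMulVec_mul] using e'
  have hms : mᵀ = m := by
    rw [hm, Matrix.transpose_sub, Matrix.transpose_smul, hk, hgs]
  obtain ⟨b, hb⟩ := exists_smul_of_cross hp0 (w := d) (fun i j => by
    have := congrFun (congrFun hms j) i
    rw [Matrix.transpose_apply, hmd] at this
    simpa [vecMulVec] using this)
  refine ⟨c, b, ?_⟩
  rw [← Matrix.smul_vecMulVec, ← hb, ← hmd, hm]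
  abel

/-- Applying a `ℚ`-linear functional entrywise to an invariant real form gives an invariant
rational form. -/
theorem map_functional_invariant (φ : ℝ →ₗ[ℚ] ℚ) (g : Matrix (Fin 3) (Fin 3) ℝ)
    (h : Matrix (Fin 3) (Fin 3) ℚ)
    (hg : (h.map ((↑) : ℚ → ℝ))ᵀ * g * h.map ((↑) : ℚ → ℝ) = g) :
    hᵀ * g.map φ * h = g.map φ := by
  have hl : ∀ (q : ℚ) (x : ℝ), φ ((q : ℝ) * x) = q * φ x := fun q x => by
    rw [← Rat.smul_def, map_smul, smul_eq_mul]
  have hr : ∀ (q : ℚ) (x : ℝ), φ (x * (q : ℝ)) = φ x * q := fun q x => by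
    rw [mul_comm, hl, mul_comm]
  conv_rhs => rw [← hg]
  ext i j
  simp [Matrix.mul_apply, hl, hr]

theorem map_cast_invariant {k h : Matrix (Fin 3) (Fin 3) ℚ} :
    (h.map ((↑) : ℚ → ℝ))ᵀ * k.map ((↑) : ℚ → ℝ) * h.map ((↑) : ℚ → ℝ) = k.map ((↑) : ℚ → ℝ) ↔
      hᵀ * k * h = k := by
  have hinj : Function.Injective (fun M : Matrix (Fin 3) (Fin 3) ℚ => M.map ((↑) : ℚ → ℝ)) :=
    Matrix.map_injective Rat.cast_injective
  rw [← hinj.eq_iff]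
  have : (hᵀ * k * h).map ((↑) : ℚ → ℝ) =
      (h.map ((↑) : ℚ → ℝ))ᵀ * k.map ((↑) : ℚ → ℝ) * h.map ((↑) : ℚ → ℝ) := by
    ext i j
    simp [Matrix.mul_apply]
  simp only [this]

/-- A rational form invariant under one element of `H_g` whose rotation angle is neither `0` nor
`π` is invariant under every rational matrix preserving `g`. -/
theorem invariant_of_invariant (g : Matrix (Fin 3) (Fin 3) ℝ) (hpd : g.PosDef)
    (hirr : ¬ ∃ (κ : ℝ) (g' : Matrix (Fin 3) (Fin 3) ℚ), g = κ • g'.map ((↑) : ℚ → ℝ))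
    (k : Matrix (Fin 3) (Fin 3) ℚ) (hk : kᵀ = k)
    (h : Matrix (Fin 3) (Fin 3) ℚ)
    (hdet : h.det = 1) (htr : -1 < h.trace) (htr' : h.trace < 3)
    (hg : (h.map ((↑) : ℚ → ℝ))ᵀ * g * h.map ((↑) : ℚ → ℝ) = g)
    (hgk : hᵀ * k * h = k) (h' : Matrix (Fin 3) (Fin 3) ℚ)
    (hg' : (h'.map ((↑) : ℚ → ℝ))ᵀ * g * h'.map ((↑) : ℚ → ℝ) = g) :
    h'ᵀ * k * h' = k := by
  have hgs : gᵀ = g := by simpa using hpd.isHermitian.eq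
  obtain ⟨φ, hφ⟩ : ∃ φ : ℝ →ₗ[ℚ] ℚ, φ (g 0 0) ≠ 0 := by
    by_contra! hall
    exact (hpd.diag_pos (i := 0)).ne' ((Module.forall_dual_apply_eq_zero_iff ℚ _).1 hall)
  set A := g.map φ with hA
  have hAs : Aᵀ = A := by rw [hA, ← Matrix.transpose_map, hgs]
  have htrace : (h.map ((↑) : ℚ → ℝ)).trace = (h.trace : ℝ) := by
    simp [Matrix.trace]
  have hdet' : (h.map ((↑) : ℚ → ℝ)).det = 1 := by
    have := (Rat.castHom ℝ).map_det h
    rw [hdet, map_one] at this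
    exact this.symm
  obtain ⟨P, hP⟩ := exists_invariant_span g (h.map ((↑) : ℚ → ℝ)) hpd hdet'
    (by rw [htrace]; exact_mod_cast htr) (by rw [htrace]; exact_mod_cast htr') hg
  obtain ⟨a, b, hab⟩ := hP (A.map ((↑) : ℚ → ℝ)) (by rw [← Matrix.transpose_map, hAs])
    (map_cast_invariant.2 (map_functional_invariant φ g h hg))
  obtain ⟨c, d, hcd⟩ := hP (k.map ((↑) : ℚ → ℝ)) (by rw [← Matrix.transpose_map, hk])
    (map_cast_invariant.2 hgk)
  have hb : b ≠ 0 := by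
    rintro rfl
    rw [zero_smul, add_zero] at hab
    have ha : a ≠ 0 := by
      rintro rfl
      have := congrFun (congrFun hab 0) 0
      simp [hA] at this
      exact hφ this
    exact hirr ⟨a⁻¹, A, by rw [hab, smul_smul, inv_mul_cancel₀ ha, one_smul]⟩
  have hPA : P = b⁻¹ • (A.map ((↑) : ℚ → ℝ) - a • g) := by
    rw [hab, add_sub_cancel_left, smul_smul, inv_mul_cancel₀ hb, one_smul]
  have hA' := map_cast_invariant.2 (map_functional_invariant φ g h' hg')
  rw [← hA] at hA'
  rw [← map_cast_invariant, hcd, hPA]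
  simp only [Matrix.mul_add, Matrix.add_mul, Matrix.mul_sub, Matrix.sub_mul, Matrix.mul_smul,
    Matrix.smul_mul, hA', hg']

theorem stmt_13 (g : Matrix (Fin 3) (Fin 3) ℝ) (hpd : g.PosDef)
    (hirr : ¬ ∃ (κ : ℝ) (g' : Matrix (Fin 3) (Fin 3) ℚ), g = κ • g'.map ((↑) : ℚ → ℝ))
    (g₁ g₂ : Matrix (Fin 3) (Fin 3) ℚ) (hs₁ : g₁ᵀ = g₁) (hs₂ : g₂ᵀ = g₂)
    (hd₁ : g₁.det ≠ 0) (hd₂ : g₂.det ≠ 0)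
    (h₁ h₂ : Matrix (Fin 3) (Fin 3) ℚ)
    (hdet₁ : h₁.det = 1) (htr₁ : -1 < h₁.trace) (htr₁' : h₁.trace < 3)
    (hdet₂ : h₂.det = 1) (htr₂ : -1 < h₂.trace) (htr₂' : h₂.trace < 3)
    (hg₁ : (h₁.map ((↑) : ℚ → ℝ))ᵀ * g * h₁.map ((↑) : ℚ → ℝ) = g)
    (hgg₁ : h₁ᵀ * g₁ * h₁ = g₁)
    (hg₂ : (h₂.map ((↑) : ℚ → ℝ))ᵀ * g * h₂.map ((↑) : ℚ → ℝ) = g)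
    (hgg₂ : h₂ᵀ * g₂ * h₂ = g₂) :
    h₁ᵀ * g₂ * h₁ = g₂ ∧ Hgroup g ∩ HgroupQ g₁ = Hgroup g ∩ HgroupQ g₂ := by
  have H₁ := invariant_of_invariant g hpd hirr g₁ hs₁ h₁ hdet₁ htr₁ htr₁' hg₁ hgg₁
  have H₂ := invariant_of_invariant g hpd hirr g₂ hs₂ h₂ hdet₂ htr₂ htr₂' hg₂ hgg₂
  refine ⟨H₂ h₁ hg₁, ?_⟩
  ext h
  exact ⟨fun hh => ⟨hh.1, hh.1.1, H₂ h hh.1.2⟩, fun hh => ⟨hh.1, hh.1.1, H₁ h hh.1.2⟩⟩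
end

section
/- Fix nonzero rationals g₁, g₂, g₃ and rationals p₀, p₁, p₂, p₃ with N := p₀² + g₁g₂p₁² + g₁g₃p₂² + g₂g₃p₃² ≠ 0. Define the 3×3 rational matrix M(p) := I + (2/N)·A, where A is the matrix with rows: row 1 = (−g₁g₂p₁² − g₁g₃p₂², g₂(p₀p₁ − g₃p₂p₃), g₃(p₀p₂ + g₂p₁p₃)); row 2 = (g₁(−p₀p₁ − g₃p₂p₃), −g₁g₂p₁² − g₂g₃p₃², g₃(p₀p₃ − g₁p₁p₂)); row 3 = (g₁(−p₀p₂ + g₂p₁p₃), g₂(−p₀p₃ − g₁p₁p₂), −g₁g₃p₂² − g₂g₃p₃²). Then M(p)ᵀ · diag(g₁, g₂, g₃) · M(p) = diag(g₁, g₂, g₃) and det M(p) = 1; i.e., M(p) ∈ H_{g̃} for the diagonal Gram matrix g̃ = diag(g₁, g₂, g₃). -/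
/-!
Write the matrix as `1 + s • A` with `s = 2 / N`, and let `G = diag (g₁, g₂, g₃)`.
There is a symmetric matrix `X` with `G * A + Aᵀ * G = -2 • X` and `Aᵀ * G * A = N • X`, so
`(1 + s • A)ᵀ * G * (1 + s • A) - G = s * (s * N - 2) • X = 0`.
Similarly, with `t = N - p₀ ^ 2`, the characteristic coefficients of `A` are: trace `-2 * t`,
sum of principal `2 × 2` minors `t * N`, and determinant `0`, so
`det (1 + s • A) - 1 = s * t * (s * N - 2) = 0`.
-/

open Matrix

/-- The rational orthogonal matrix for the diagonal Gram matrix `diag (g₁, g₂, g₃)`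
parametrised by an element `p₀ + p₁σ₁σ₂ + p₂σ₁σ₃ + p₃σ₂σ₃` of the even Clifford algebra. -/
def MoireParam (g₁ g₂ g₃ p₀ p₁ p₂ p₃ : ℚ) : Matrix (Fin 3) (Fin 3) ℚ :=
  1 + (2 / (p₀ ^ 2 + g₁ * g₂ * p₁ ^ 2 + g₁ * g₃ * p₂ ^ 2 + g₂ * g₃ * p₃ ^ 2)) •
    !![-(g₁ * g₂ * p₁ ^ 2) - g₁ * g₃ * p₂ ^ 2, g₂ * (p₀ * p₁ - g₃ * p₂ * p₃),
         g₃ * (p₀ * p₂ + g₂ * p₁ * p₃);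
       g₁ * (-(p₀ * p₁) - g₃ * p₂ * p₃), -(g₁ * g₂ * p₁ ^ 2) - g₂ * g₃ * p₃ ^ 2,
         g₃ * (p₀ * p₃ - g₁ * p₁ * p₂);
       g₁ * (-(p₀ * p₂) + g₂ * p₁ * p₃), g₂ * (-(p₀ * p₃) - g₁ * p₁ * p₂),
         -(g₁ * g₃ * p₂ ^ 2) - g₂ * g₃ * p₃ ^ 2]

theorem stmt_15 (g₁ g₂ g₃ : ℚ) (hg₁ : g₁ ≠ 0) (hg₂ : g₂ ≠ 0) (hg₃ : g₃ ≠ 0)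
    (p₀ p₁ p₂ p₃ : ℚ)
    (hN : p₀ ^ 2 + g₁ * g₂ * p₁ ^ 2 + g₁ * g₃ * p₂ ^ 2 + g₂ * g₃ * p₃ ^ 2 ≠ 0) :
    (MoireParam g₁ g₂ g₃ p₀ p₁ p₂ p₃)ᵀ * Matrix.diagonal ![g₁, g₂, g₃] *
        MoireParam g₁ g₂ g₃ p₀ p₁ p₂ p₃ = Matrix.diagonal ![g₁, g₂, g₃] ∧
    (MoireParam g₁ g₂ g₃ p₀ p₁ p₂ p₃).det = 1 := by
  obtain ⟨s, hs⟩ : ∃ s, s = 2 / (p₀ ^ 2 + g₁ * g₂ * p₁ ^ 2 + g₁ * g₃ * p₂ ^ 2 +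
      g₂ * g₃ * p₃ ^ 2) := ⟨_, rfl⟩
  have hsN : s * (p₀ ^ 2 + g₁ * g₂ * p₁ ^ 2 + g₁ * g₃ * p₂ ^ 2 + g₂ * g₃ * p₃ ^ 2) = 2 := by
    rw [hs, div_mul_cancel₀ _ hN]
  unfold MoireParam
  rw [← hs]
  constructor
  -- The coefficients of `s * hsN` below are the nine entries of `X`, in row order.
  · ext i j
    fin_cases i <;> fin_cases j <;>
      simp [Matrix.mul_apply, Fin.sum_univ_three, Matrix.diagonal_apply, Matrix.one_apply]
    · linear_combination s * (g₁ * (g₁ * g₂ * p₁ ^ 2 + g₁ * g₃ * p₂ ^ 2)) * hsN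
    · linear_combination s * (g₁ * g₂ * g₃ * p₂ * p₃) * hsN
    · linear_combination s * (-(g₁ * g₂ * g₃ * p₁ * p₃)) * hsN
    · linear_combination s * (g₁ * g₂ * g₃ * p₂ * p₃) * hsN
    · linear_combination s * (g₂ * (g₁ * g₂ * p₁ ^ 2 + g₂ * g₃ * p₃ ^ 2)) * hsN
    · linear_combination s * (g₁ * g₂ * g₃ * p₁ * p₂) * hsN
    · linear_combination s * (-(g₁ * g₂ * g₃ * p₁ * p₃)) * hsN
    · linear_combination s * (g₁ * g₂ * g₃ * p₁ * p₂) * hsN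
    · linear_combination s * (g₃ * (g₁ * g₃ * p₂ ^ 2 + g₂ * g₃ * p₃ ^ 2)) * hsN
  · rw [Matrix.det_fin_three]
    simp [Matrix.one_apply]
    linear_combination
      s * (g₁ * g₂ * p₁ ^ 2 + g₁ * g₃ * p₂ ^ 2 + g₂ * g₃ * p₃ ^ 2) * hsN
end

section
/- (Completeness of the Clifford parametrisation.) Fix positive rationals g₁, g₂, g₃ and set g̃ = diag(g₁, g₂, g₃). Let h be a 3×3 rational matrix with det h = 1, hᵀ g̃ h = g̃, and det(I + h) ≠ 0 (equivalently, the rotation angle of the associated rotation is not π). Then there exist rationals p₁, p₂, p₃ such that, with p₀ = 1 and N := 1 + g₁g₂p₁² + g₁g₃p₂² + g₂g₃p₃², one has h = M(p), where M(p) := I + (2/N)·A and A is the matrix with rows: row 1 = (−g₁g₂p₁² − g₁g₃p₂², g₂(p₀p₁ − g₃p₂p₃), g₃(p₀p₂ + g₂p₁p₃)); row 2 = (g₁(−p₀p₁ − g₃p₂p₃), −g₁g₂p₁² − g₂g₃p₃², g₃(p₀p₃ − g₁p₁p₂)); row 3 = (g₁(−p₀p₂ + g₂p₁p₃), g₂(−p₀p₃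 − g₁p₁p₂), −g₁g₃p₂² − g₂g₃p₃²). -/
/-!
The proof goes through the Cayley transform. Since `1 + h` is invertible, put
`S = (h - 1) (1 + h)⁻¹`. Writing `G = diag (g₁, g₂, g₃)`, the relation `hᵀ G h = G` says exactly
that `G S` is skew-symmetric (`gram_mul_skew`), so `S` has the shape `cayleyGen g₁ g₂ g₃ p₁ p₂ p₃`
with `pᵢ` read off its entries above the diagonal. Such an `S` satisfies `S³ = -(N - 1) S` with
`N = 1 + g₁g₂p₁² + g₁g₃p₂² + g₂g₃p₃²`, and
`MoireParam g₁ g₂ g₃ 1 p₁ p₂ p₃ = 1 + (2 / N) (S + S²)`; hence `MoireParam * (1 - S) = 1 + S`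
(`moireParam_mul`), which is also the equation satisfied by `h`, and `1 - S = 2 (1 + h)⁻¹` can be
cancelled.
-/

open Matrix

/-- The infinitesimal generator attached to `p₁σ₁σ₂ + p₂σ₁σ₃ + p₃σ₂σ₃`: the general matrix `S` for
which `diag (g₁, g₂, g₃) * S` is skew-symmetric (when the `gᵢ` are nonzero). -/
def cayleyGen (g₁ g₂ g₃ p₁ p₂ p₃ : ℚ) : Matrix (Fin 3) (Fin 3) ℚ :=
  !![0, g₂ * p₁, g₃ * p₂; -(g₁ * p₁), 0, g₃ * p₃; -(g₁ * p₂), -(g₂ * p₃), 0]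

/-- `MoireParam` with `p₀ = 1` is the Cayley transform `(1 + S) (1 - S)⁻¹` of `S = cayleyGen`. -/
lemma moireParam_mul (g₁ g₂ g₃ p₁ p₂ p₃ : ℚ)
    (hN : 1 + g₁ * g₂ * p₁ ^ 2 + g₁ * g₃ * p₂ ^ 2 + g₂ * g₃ * p₃ ^ 2 ≠ 0) :
    MoireParam g₁ g₂ g₃ 1 p₁ p₂ p₃ * (1 - cayleyGen g₁ g₂ g₃ p₁ p₂ p₃)
      = 1 + cayleyGen g₁ g₂ g₃ p₁ p₂ p₃ := by
  ext i j
  fin_cases i <;> fin_cases j <;>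
    simp [MoireParam, cayleyGen, Matrix.mul_apply, Fin.sum_univ_three, Matrix.one_apply] <;>
    field_simp <;> ring

/-- The Cayley transform of an isometry of the Gram matrix `G` is skew-adjoint for `G`. -/
lemma gram_mul_skew (G h S : Matrix (Fin 3) (Fin 3) ℚ) (hG : Gᵀ = G) (hpres : hᵀ * G * h = G)
    (hu : IsUnit (1 + h)) (hS : S * (1 + h) = h - 1) : (G * S)ᵀ = -(G * S) := by
  have hut : IsUnit (1 + h)ᵀ := (Matrix.isUnit_transpose _).2 hu
  -- Congruence by `1 + h` turns `G * S` into `G h - hᵀ G`, visibly skew.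
  have key : (1 + h)ᵀ * (G * S) * (1 + h) = G * h - hᵀ * G := by
    calc (1 + h)ᵀ * (G * S) * (1 + h) = (1 + h)ᵀ * G * (S * (1 + h)) := by
          simp only [Matrix.mul_assoc]
      _ = G * h - G + (hᵀ * G * h - hᵀ * G) := by
          rw [hS, Matrix.transpose_add, Matrix.transpose_one]; noncomm_ring
      _ = G * h - hᵀ * G := by rw [hpres]; abel
  have key' := congrArg Matrix.transpose key
  simp only [Matrix.transpose_mul _ (1 + h), Matrix.transpose_mul (1 + h)ᵀ,
    Matrix.transpose_transpose, Matrix.transpose_sub, Matrix.transpose_mul G h,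
    Matrix.transpose_mul hᵀ G, hG] at key'
  apply hut.mul_left_cancel
  apply hu.mul_right_cancel
  rw [Matrix.mul_neg, Matrix.neg_mul, key, Matrix.mul_assoc, key']
  abel

theorem stmt_16 (g₁ g₂ g₃ : ℚ) (hg₁ : 0 < g₁) (hg₂ : 0 < g₂) (hg₃ : 0 < g₃)
    (h : Matrix (Fin 3) (Fin 3) ℚ) (hdet : h.det = 1)
    (hpres : hᵀ * Matrix.diagonal ![g₁, g₂, g₃] * h = Matrix.diagonal ![g₁, g₂, g₃])
    (hrot : (1 + h).det ≠ 0) :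
    ∃ p₁ p₂ p₃ : ℚ, h = MoireParam g₁ g₂ g₃ 1 p₁ p₂ p₃ := by
  have hd : IsUnit (1 + h).det := isUnit_iff_ne_zero.2 hrot
  obtain ⟨S, hS⟩ : ∃ S, S * (1 + h) = h - 1 :=
    ⟨(h - 1) * (1 + h)⁻¹, Matrix.nonsing_inv_mul_cancel_right _ _ hd⟩
  have hskew := gram_mul_skew _ h S (Matrix.diagonal_transpose _) hpres
    ((Matrix.isUnit_iff_isUnit_det _).2 hd) hS
  have e : ∀ i j, ![g₁, g₂, g₃] j * S j i = -(![g₁, g₂, g₃] i * S i j) := fun i j => by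
    simpa [Matrix.diagonal_mul] using congrFun (congrFun hskew i) j
  have hSp : S = cayleyGen g₁ g₂ g₃ (S 0 1 / g₂) (S 0 2 / g₃) (S 1 2 / g₃) := by
    have e01 := e 0 1
    have e02 := e 0 2
    have e12 := e 1 2
    simp at e01 e02 e12
    have diag : ∀ g s : ℚ, 0 < g → g * s = -(g * s) → s = 0 := fun g s hg hs =>
      mul_left_cancel₀ hg.ne' (by linarith : g * s = g * 0)
    have e00 : S 0 0 = 0 := diag g₁ _ hg₁ (e 0 0)
    have e11 : S 1 1 = 0 := diag g₂ _ hg₂ (e 1 1)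
    have e22 : S 2 2 = 0 := diag g₃ _ hg₃ (e 2 2)
    ext i j
    fin_cases i <;> fin_cases j <;> simp [cayleyGen, e00, e11, e22] <;> field_simp <;>
      linarith
  refine ⟨S 0 1 / g₂, S 0 2 / g₃, S 1 2 / g₃, ?_⟩
  have hM := moireParam_mul g₁ g₂ g₃ (S 0 1 / g₂) (S 0 2 / g₃) (S 1 2 / g₃) (by positivity)
  rw [← hSp] at hM
  set M := MoireParam g₁ g₂ g₃ 1 (S 0 1 / g₂) (S 0 2 / g₃) (S 1 2 / g₃)
  have h1 : (1 - S) * (1 + h) = (2 : ℚ) • 1 := by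
    rw [Matrix.sub_mul, hS, Matrix.one_mul, two_smul]; abel
  have h2 : (1 + S) * (1 + h) = (2 : ℚ) • h := by
    rw [Matrix.add_mul, hS, Matrix.one_mul, two_smul]; abel
  have h3 : (2 : ℚ) • h = (2 : ℚ) • M := by
    rw [← h2, ← hM, Matrix.mul_assoc, h1, Matrix.mul_smul, Matrix.mul_one]
  exact smul_right_injective _ (two_ne_zero) h3
end

section
/- (Tetragonal and cubic lattices always admit nontrivial Moiré crystals.) For all real numbers a > 0 and c > 0, the set H_g := {h : h is a 3×3 rational matrix with det h = 1 and hᵀ g h = g}, where g = diag(a², a², c²) is the Gram matrix of a tetragonal (or, when c = a, cubic) lattice, is infinite. -/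
/-!
The rational points of the unit circle, parametrised by `t : ℚ`, give infinitely many rational
rotations about the third axis. Each has determinant one and preserves the form
`diag(a², a², c²)` because the first two diagonal entries agree, whatever `a` and `c` are.
Distinct parameters give distinct rotations (`rationalRotation_injective`).
-/

open Matrix

/-- The rotation about the third axis through the angle `θ` with `tan (θ / 2) = t`. -/
def rationalRotation (t : ℚ) : Matrix (Fin 3) (Fin 3) ℚ :=
  !![(1 - t ^ 2) / (1 + t ^ 2), -(2 * t / (1 + t ^ 2)), 0;
     2 * t / (1 + t ^ 2), (1 - t ^ 2) / (1 + t ^ 2), 0;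
     0, 0, 1]

/-- The parameter is recovered by the half-angle formula `tan (θ / 2) = sin θ / (1 + cos θ)`. -/
lemma rationalRotation_injective : Function.Injective rationalRotation := by
  have key (t : ℚ) :
      rationalRotation t 1 0 / (1 + rationalRotation t 0 0) = t := by
    have h : 1 + t ^ 2 ≠ 0 := by positivity
    have hcos : 1 + rationalRotation t 0 0 = 2 / (1 + t ^ 2) := by
      simp only [rationalRotation, of_apply, cons_val]
      field_simp
      ring
    rw [hcos]
    simp only [rationalRotation, of_apply, cons_val]
    field_simp
  intro s t hst
  rw [← key s, ← key t, hst]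

theorem stmt_17 (a c : ℝ) (ha : 0 < a) (hc : 0 < c) :
    {h : Matrix (Fin 3) (Fin 3) ℚ | h.det = 1 ∧
      (h.map ((↑) : ℚ → ℝ))ᵀ * Matrix.diagonal ![a ^ 2, a ^ 2, c ^ 2] *
        h.map ((↑) : ℚ → ℝ) = Matrix.diagonal ![a ^ 2, a ^ 2, c ^ 2]}.Infinite := by
  refine Set.infinite_of_injective_forall_mem rationalRotation_injective fun t => ⟨?_, ?_⟩
  · have h : 1 + t ^ 2 ≠ 0 := by positivity
    simp [rationalRotation, det_fin_three]
    field_simp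
    ring
  · have h : 1 + (t : ℝ) ^ 2 ≠ 0 := by positivity
    ext i j
    fin_cases i <;> fin_cases j <;>
      simp [rationalRotation, Matrix.mul_apply, Fin.sum_univ_three, diagonal] <;>
      field_simp <;> ring
end

section
/- (The group H_g is 'three-parametric' for rational Gram matrices: it contains rotations about non-collinear axes.) Let g be a 3×3 rational symmetric positive definite matrix. Then there exist 3×3 rational matrices h₁ and h₂, each with determinant 1, each different from the identity, satisfying h₁ᵀ g h₁ = g and h₂ᵀ g h₂ = g, such that the fixed subspaces {v ∈ ℚ³ : h₁ v = v} and {v ∈ ℚ³ : h₂ v = v} are distinct. -/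
/-!
For `v ≠ 0` the half-turn about the line `ℚ v` with respect to the form `g`,
`u ↦ 2 (vᵀ g u) / (vᵀ g v) • v - u`, is the negative of a reflection. It is rational, preserves `g`,
has determinant `1` in dimension three, and its fixed subspace is exactly `ℚ v`. The half-turns about
two linearly independent vectors, here the first two standard basis vectors, are then nontrivial and
have distinct fixed subspaces.
-/

open Matrix

/-- The half-turn about the line spanned by `v`, with respect to the symmetric form `g`. It is
meaningful only when `v ⬝ᵥ g *ᵥ v ≠ 0`. -/
def halfTurn (g : Matrix (Fin 3) (Fin 3) ℚ) (v : Fin 3 → ℚ) : Matrix (Fin 3) (Fin 3) ℚ :=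
  (2 / (v ⬝ᵥ g *ᵥ v)) • vecMulVec v (g *ᵥ v) - 1

lemma halfTurn_mulVec (g : Matrix (Fin 3) (Fin 3) ℚ) (v u : Fin 3 → ℚ) :
    halfTurn g v *ᵥ u = (2 / (v ⬝ᵥ g *ᵥ v) * (g *ᵥ v ⬝ᵥ u)) • v - u := by
  simp [halfTurn, sub_mulVec, smul_mulVec, vecMulVec_mulVec, smul_smul]

lemma halfTurn_mulVec_self (g : Matrix (Fin 3) (Fin 3) ℚ) (v : Fin 3 → ℚ)
    (hv : v ⬝ᵥ g *ᵥ v ≠ 0) : halfTurn g v *ᵥ v = v := by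
  rw [halfTurn_mulVec, dotProduct_comm (g *ᵥ v) v, div_mul_cancel₀ _ hv, two_smul,
    add_sub_cancel_right]

lemma eq_smul_of_halfTurn_mulVec_eq (g : Matrix (Fin 3) (Fin 3) ℚ) (v u : Fin 3 → ℚ)
    (h : halfTurn g v *ᵥ u = u) : ∃ c : ℚ, u = c • v := by
  rw [halfTurn_mulVec] at h
  refine ⟨2 / (v ⬝ᵥ g *ᵥ v) * (g *ᵥ v ⬝ᵥ u) / 2, ?_⟩
  ext i
  have hi := congrFun h i
  simp only [Pi.sub_apply, Pi.smul_apply, smul_eq_mul] at hi ⊢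
  linarith

lemma det_halfTurn (g : Matrix (Fin 3) (Fin 3) ℚ) (v : Fin 3 → ℚ)
    (hv : v ⬝ᵥ g *ᵥ v ≠ 0) : (halfTurn g v).det = 1 := by
  -- With `w = g v` the determinant is `c (v ⬝ᵥ w) - 1`, where `c (v ⬝ᵥ w) = 2`.
  have key : ∀ (c : ℚ) (w : Fin 3 → ℚ), (c • vecMulVec v w - 1).det = c * (v ⬝ᵥ w) - 1 := by
    intro c w
    simp [det_fin_three, vecMulVec_apply, dotProduct, Fin.sum_univ_three, one_apply]
    ring
  rw [halfTurn, key, div_mul_cancel₀ _ hv]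
  norm_num

lemma halfTurn_preserves (g : Matrix (Fin 3) (Fin 3) ℚ) (hsym : gᵀ = g) (v : Fin 3 → ℚ)
    (hv : v ⬝ᵥ g *ᵥ v ≠ 0) : (halfTurn g v)ᵀ * g * halfTurn g v = g := by
  have hvg : v ᵥ* g = g *ᵥ v := by rw [← mulVec_transpose, hsym]
  have hq : (g *ᵥ v) ⬝ᵥ v ≠ 0 := by rwa [dotProduct_comm]
  simp only [halfTurn, transpose_sub, transpose_smul, transpose_vecMulVec, transpose_one,
    sub_mul, mul_sub, Matrix.smul_mul, Matrix.mul_smul, vecMulVec_mul, mul_vecMulVec, hvg, one_mul, mul_one,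
    smul_mulVec, vecMulVec_mulVec, dotProduct_comm v]
  ext i j
  simp [vecMulVec_apply]
  field_simp
  ring

theorem stmt_18 (g : Matrix (Fin 3) (Fin 3) ℚ) (hsym : gᵀ = g)
    (hpd : ∀ v : Fin 3 → ℚ, v ≠ 0 → 0 < v ⬝ᵥ g.mulVec v) :
    ∃ h₁ h₂ : Matrix (Fin 3) (Fin 3) ℚ,
      h₁.det = 1 ∧ h₂.det = 1 ∧ h₁ ≠ 1 ∧ h₂ ≠ 1 ∧
      h₁ᵀ * g * h₁ = g ∧ h₂ᵀ * g * h₂ = g ∧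
      {v : Fin 3 → ℚ | h₁.mulVec v = v} ≠ {v : Fin 3 → ℚ | h₂.mulVec v = v} := by
  have hq : ∀ i : Fin 3, (Pi.single i 1 : Fin 3 → ℚ) ⬝ᵥ g *ᵥ Pi.single i 1 ≠ 0 := fun i =>
    (hpd _ (by simp)).ne'
  have hmoves : ∀ i j : Fin 3, i ≠ j →
      halfTurn g (Pi.single i 1) *ᵥ Pi.single j 1 ≠ (Pi.single j 1 : Fin 3 → ℚ) := by
    intro i j hij h
    obtain ⟨c, hc⟩ := eq_smul_of_halfTurn_mulVec_eq g _ _ h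
    simpa [hij.symm] using congrFun hc j
  have hne : ∀ i j : Fin 3, i ≠ j → halfTurn g (Pi.single i 1) ≠ 1 := fun i j hij h =>
    hmoves i j hij (by rw [h, one_mulVec])
  refine ⟨halfTurn g (Pi.single 0 1), halfTurn g (Pi.single 1 1), det_halfTurn g _ (hq 0),
    det_halfTurn g _ (hq 1), hne 0 1 (by decide), hne 1 0 (by decide),
    halfTurn_preserves g hsym _ (hq 0), halfTurn_preserves g hsym _ (hq 1), fun h => ?_⟩
  exact hmoves 1 0 (by decide) (h.subset (halfTurn_mulVec_self g _ (hq 0)))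
end

section
/- (Hexagonal lattices always admit nontrivial Moiré crystals.) For all real numbers a > 0 and c > 0, let g be the Gram matrix of the hexagonal lattice with cell parameters (a, a, c, 90°, 90°, 120°), i.e., the 3×3 real matrix with rows (a², −a²/2, 0), (−a²/2, a², 0), (0, 0, c²). Then the set H_g := {h : h is a 3×3 rational matrix with det h = 1 and hᵀ g h = g} is infinite. -/
open Matrix

/-!
In the basis `1, ω` with `ω² + ω + 1 = 0`, the horizontal layer of the hexagonal lattice is
`ℤ[ω]`, and its squared length is `a²` times the norm `N(p + qω) = p² - pq + q²`. Multiplication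
by an element of norm one of `ℚ(ω)`, extended by the identity on the third axis, is therefore a
rational isometry of determinant one (`hexRot_det`, `hexRot_isometry`). By Hilbert 90 the elements
of norm one are the quotients `z / z̄ = z² / N(z)`; the choices `z = t + ω` with `t ∈ ℕ` give
pairwise distinct ones, because `z / z̄` determines `z` up to a rational factor.
-/

/-- The matrix, in the basis `1, ω` together with a third vector, of multiplication by `p + qω`
(where `ω² + ω + 1 = 0`) on the first two coordinates and the identity on the third. -/
def hexRot (p q : ℚ) : Matrix (Fin 3) (Fin 3) ℚ :=
  !![p, -q, 0; q, p - q, 0; 0, 0, 1]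

lemma hexRot_det {p q : ℚ} (h : p ^ 2 - p * q + q ^ 2 = 1) : (hexRot p q).det = 1 := by
  simp [hexRot, Matrix.det_fin_three]
  linarith

lemma hexRot_isometry (a c : ℝ) {p q : ℚ} (h : p ^ 2 - p * q + q ^ 2 = 1) :
    ((hexRot p q).map ((↑) : ℚ → ℝ))ᵀ *
        !![a ^ 2, -a ^ 2 / 2, 0; -a ^ 2 / 2, a ^ 2, 0; 0, 0, c ^ 2] *
        (hexRot p q).map ((↑) : ℚ → ℝ) =
      !![a ^ 2, -a ^ 2 / 2, 0; -a ^ 2 / 2, a ^ 2, 0; 0, 0, c ^ 2] := by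
  have h' : (p : ℝ) ^ 2 - p * q + q ^ 2 = 1 := by exact_mod_cast h
  ext i j
  fin_cases i <;> fin_cases j <;>
    simp [hexRot, Matrix.mul_apply, Fin.sum_univ_three]
  · linear_combination a ^ 2 * h'
  · linear_combination (-a ^ 2 / 2) * h'
  · linear_combination (-a ^ 2 / 2) * h'
  · linear_combination a ^ 2 * h'

/-- The coordinate of `1` in `z² / N(z)`, for `z = t + ω`. -/
def hexP (t : ℕ) : ℚ := ((t : ℚ) ^ 2 - 1) / ((t : ℚ) ^ 2 - t + 1)

/-- The coordinate of `ω` in `z² / N(z)`, for `z = t + ω`. -/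
def hexQ (t : ℕ) : ℚ := (2 * (t : ℚ) - 1) / ((t : ℚ) ^ 2 - t + 1)

lemma hexNorm_ne_zero (t : ℕ) : (t : ℚ) ^ 2 - t + 1 ≠ 0 := by
  nlinarith [sq_nonneg ((t : ℚ) - 1 / 2)]

lemma hexP_hexQ_norm (t : ℕ) : hexP t ^ 2 - hexP t * hexQ t + hexQ t ^ 2 = 1 := by
  have := hexNorm_ne_zero t
  unfold hexP hexQ
  -- An atomic denominator keeps `field_simp` from rewriting it so that `this` no longer matches.
  generalize hN : (t : ℚ) ^ 2 - t + 1 = N at *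
  field_simp
  subst hN
  ring

/-- With `u = z / z̄`, the number `1 + u = (z + z̄) / z̄` is a rational multiple of `z = t + ω`;
this relation recovers `t` from `u`. -/
lemma hexP_add_one (t : ℕ) : hexP t + 1 = t * hexQ t := by
  have := hexNorm_ne_zero t
  unfold hexP hexQ
  -- An atomic denominator keeps `field_simp` from rewriting it so that `this` no longer matches.
  generalize hN : (t : ℚ) ^ 2 - t + 1 = N at *
  field_simp
  subst hN
  ring

lemma hexQ_ne_zero (t : ℕ) : hexQ t ≠ 0 := by
  refine div_ne_zero (fun h => ?_) (hexNorm_ne_zero t)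
  have h2 : (2 : ℤ) * t - 1 = 0 := by exact_mod_cast h
  omega

theorem stmt_19 (a c : ℝ) (ha : 0 < a) (hc : 0 < c) :
    {h : Matrix (Fin 3) (Fin 3) ℚ | h.det = 1 ∧
      (h.map ((↑) : ℚ → ℝ))ᵀ * !![a ^ 2, -a ^ 2 / 2, 0; -a ^ 2 / 2, a ^ 2, 0; 0, 0, c ^ 2] *
        h.map ((↑) : ℚ → ℝ) =
        !![a ^ 2, -a ^ 2 / 2, 0; -a ^ 2 / 2, a ^ 2, 0; 0, 0, c ^ 2]}.Infinite := by
  refine Set.infinite_of_injective_forall_mem (f := fun t : ℕ => hexRot (hexP t) (hexQ t))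
    (fun s t hst => ?_)
    (fun t => ⟨hexRot_det (hexP_hexQ_norm t), hexRot_isometry a c (hexP_hexQ_norm t)⟩)
  have hp : hexP s = hexP t := by simpa [hexRot] using congrFun (congrFun hst 0) 0
  have hq : hexQ s = hexQ t := by simpa [hexRot] using congrFun (congrFun hst 1) 0
  have hs := hexP_add_one s
  rw [hp, hq, hexP_add_one t] at hs
  exact_mod_cast (mul_right_cancel₀ (hexQ_ne_zero t) hs).symm
end
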